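/- For every sign string S of length n ≤ 12 that is not a cyclic rotation of (+,+,−,−,+,+,−,−,+,+,−,−), and every dominant state string J for S, the web tensor of any complete execution of the growth algorithm from (S,J) has the negative-exponent property relative to J. -/

import Mathlib

/-!
*The web tensor does not depend on the execution.* Rules at disjoint positions commute, and two
rules overlapping in one letter can each be followed by one further rule so that the words and the
composite maps agree. By this diamond property any rule applicable to a word may be taken as the
first one of an execution.

*Some first steps preserve the negative-exponent property.* A map with entries in `ℤ[v⁻¹]` that at
`v = ∞` sends the basis tensor of the shorter state string to that of the longer one preserves the
lattice of tensors with entries in `v⁻¹ ℤ[v⁻¹]`, hence the congruence of a web tensor to its leading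
basis tensor modulo this lattice. The maps of the U- and Y-rules are of this kind. The map of an
H-rule is not, because of a single entry `v`, but its composite with the map of an overlapping
Y-rule is, since this entry only meets coefficients with a factor `v⁻¹`. That the leading
coefficient is exactly `1` follows from lexicographic triangularity of all the maps.

*Short words offer such a first step.* A finite search through the lattice paths shows that every
nonempty dominant word of length at most 12 to which none of these reductions applies has a rotation
of `base` as its sign string. The reductions shorten the word and `base` has length 12, so induction
on the length concludes.
-/

noncomputable section

/-- The ground field `K = ℚ(v)`. -/
abbrev K : Type := RatFunc ℚ

/-- The indeterminate `v`. -/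
def v : K := RatFunc.X

/-- The three states `-1, 0, 1`. -/
inductive St where
  | neg : St
  | zero : St
  | pos : St
deriving DecidableEq

instance : Fintype St where
  elems := {St.neg, St.zero, St.pos}
  complete := fun x => by cases x <;> simp

/-- The integer value of a state. -/
def stval : St → ℤ
  | .neg => -1
  | .zero => 0
  | .pos => 1

/-- The order `-1 < 0 < 1` on states. -/
def stLt (a b : St) : Prop := stval a < stval b

/-- The weight `μ(s, j) ∈ ℤ²`; `true` is the sign `+`, `false` is `-`. -/
def wt : Bool → St → ℤ × ℤ
  | true, .pos => (1, 0)
  | true, .zero => (-1, 1)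
  | true, .neg => (0, -1)
  | false, .pos => (0, 1)
  | false, .zero => (1, -1)
  | false, .neg => (-1, 0)

/-- Total weight `Σ μ(s_k, j_k)` of a sign string and a state string. -/
def wtSum (S : List Bool) (J : List St) : ℤ × ℤ :=
  ((S.zip J).map fun p => wt p.1 p.2).sum

/-- A state string is dominant if its lattice path stays in the dominant
Weyl chamber and returns to the origin. -/
def Dominant (S : List Bool) (J : List St) : Prop :=
  J.length = S.length ∧
  (∀ k : ℕ, 0 ≤ (wtSum (S.take k) (J.take k)).1 ∧ 0 ≤ (wtSum (S.take k) (J.take k)).2) ∧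
  wtSum S J = 0

/-- Coefficients of `b^{+-}(1) ∈ V⁺ ⊗ V⁻`. -/
def bCpm : St → St → K
  | .pos, .neg => 1
  | .zero, .zero => v⁻¹
  | .neg, .pos => v⁻¹ ^ 2
  | _, _ => 0

/-- Coefficients of `b^{-+}(1) ∈ V⁻ ⊗ V⁺`. -/
def bCmp : St → St → K
  | .pos, .neg => 1
  | .zero, .zero => v⁻¹
  | .neg, .pos => v⁻¹ ^ 2
  | _, _ => 0

/-- Matrix entries of `σ_{+-} : V⁺ ⊗ V⁻ → K`. -/
def sCpm : St → St → K
  | .neg, .pos => 1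
  | .zero, .zero => v
  | .pos, .neg => v ^ 2
  | _, _ => 0

/-- Matrix entries of `σ_{-+} : V⁻ ⊗ V⁺ → K`. -/
def sCmp : St → St → K
  | .neg, .pos => 1
  | .zero, .zero => v
  | .pos, .neg => v ^ 2
  | _, _ => 0

/-- `tYpp a b c` is the coefficient of `e_a ⊗ e_b` in `t^{++}_-(e_c)`. -/
def tYpp : St → St → St → K
  | .pos, .zero, .pos => 1
  | .zero, .pos, .pos => v⁻¹
  | .pos, .neg, .zero => 1
  | .neg, .pos, .zero => v⁻¹
  | .zero, .neg, .neg => 1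
  | .neg, .zero, .neg => v⁻¹
  | _, _, _ => 0

/-- `tYmm a b c` is the coefficient of `e_a ⊗ e_b` in `t^{--}_+(e_c)`. -/
def tYmm : St → St → St → K
  | .pos, .zero, .pos => 1
  | .zero, .pos, .pos => v⁻¹
  | .pos, .neg, .zero => 1
  | .neg, .pos, .zero => v⁻¹
  | .zero, .neg, .neg => 1
  | .neg, .zero, .neg => v⁻¹
  | _, _, _ => 0

/-- `tLpp a b c` is the coefficient of `e_c` in `t^-_{++}(e_a ⊗ e_b)`. -/
def tLpp : St → St → St → K
  | .pos, .zero, .pos => v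
  | .zero, .pos, .pos => 1
  | .pos, .neg, .zero => v
  | .neg, .pos, .zero => 1
  | .zero, .neg, .neg => v
  | .neg, .zero, .neg => 1
  | _, _, _ => 0

/-- `tLmm a b c` is the coefficient of `e_c` in `t^+_{--}(e_a ⊗ e_b)`. -/
def tLmm : St → St → St → K
  | .pos, .zero, .pos => v
  | .zero, .pos, .pos => 1
  | .pos, .neg, .zero => v
  | .neg, .pos, .zero => 1
  | .zero, .neg, .neg => v
  | .neg, .zero, .neg => 1
  | _, _, _ => 0

/-- Matrix entries of the H-map
`(id_{V⁺} ⊗ t^-_{++}) ∘ (t^{++}_- ⊗ id_{V⁺}) : V⁻ ⊗ V⁺ → V⁺ ⊗ V⁻`: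
`HCpm a b c d` is the coefficient of `e_a ⊗ e_b` in the image of `e_c ⊗ e_d`. -/
def HCpm (a b c d : St) : K := ∑ y : St, tYpp a y c * tLpp y d b

/-- Matrix entries of the H-map
`(t^-_{++} ⊗ id_{V⁺}) ∘ (id_{V⁺} ⊗ t^{++}_-) : V⁺ ⊗ V⁻ → V⁻ ⊗ V⁺`:
`HCmp a b c d` is the coefficient of `e_a ⊗ e_b` in the image of `e_c ⊗ e_d`. -/
def HCmp (a b c d : St) : K := ∑ x : St, tLpp c x a * tYpp x b d

/-- State patterns of the three H-rules: `(j_k, j_{k+1})` on top, the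
replacement below. -/
inductive HPat : St → St → St → St → Prop where
  | h1 : HPat .pos .zero .zero .pos
  | h2 : HPat .zero .zero .neg .pos
  | h3 : HPat .zero .neg .neg .zero

/-- State patterns of the three Y-rules. -/
inductive YPat : St → St → St → Prop where
  | y1 : YPat .pos .zero .pos
  | y2 : YPat .pos .neg .zero
  | y3 : YPat .zero .neg .neg

/-- One application of a growth rule, rewriting `(S, J)` to `(S', J')`. -/
inductive Step : List Bool → List St → List Bool → List St → Prop where
  | hstep (A B : List Bool) (P Q : List St) (s1 s2 : Bool) (j1 j2 j1' j2' : St)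
      (hl : A.length = P.length) (hs : s1 ≠ s2) (hp : HPat j1 j2 j1' j2') :
      Step (A ++ s1 :: s2 :: B) (P ++ j1 :: j2 :: Q)
        (A ++ (!s1) :: (!s2) :: B) (P ++ j1' :: j2' :: Q)
  | ustep (A B : List Bool) (P Q : List St) (s1 s2 : Bool)
      (hl : A.length = P.length) (hs : s1 ≠ s2) :
      Step (A ++ s1 :: s2 :: B) (P ++ St.pos :: St.neg :: Q) (A ++ B) (P ++ Q)
  | ystep (A B : List Bool) (P Q : List St) (s : Bool) (j1 j2 j' : St)
      (hl : A.length = P.length) (hp : YPat j1 j2 j') :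
      Step (A ++ s :: s :: B) (P ++ j1 :: j2 :: Q) (A ++ (!s) :: B) (P ++ j' :: Q)

/-- A complete execution of the growth algorithm from `(S, J)` down to the
pair of empty strings. -/
inductive Exec : List Bool → List St → Type where
  | nil : Exec [] []
  | hstep (A B : List Bool) (P Q : List St) (s1 s2 : Bool) (j1 j2 j1' j2' : St)
      (hl : A.length = P.length) (hs : s1 ≠ s2) (hp : HPat j1 j2 j1' j2')
      (e : Exec (A ++ (!s1) :: (!s2) :: B) (P ++ j1' :: j2' :: Q)) :
      Exec (A ++ s1 :: s2 :: B) (P ++ j1 :: j2 :: Q)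
  | ustep (A B : List Bool) (P Q : List St) (s1 s2 : Bool)
      (hl : A.length = P.length) (hs : s1 ≠ s2)
      (e : Exec (A ++ B) (P ++ Q)) :
      Exec (A ++ s1 :: s2 :: B) (P ++ St.pos :: St.neg :: Q)
  | ystep (A B : List Bool) (P Q : List St) (s : Bool) (j1 j2 j' : St)
      (hl : A.length = P.length) (hp : YPat j1 j2 j')
      (e : Exec (A ++ (!s) :: B) (P ++ j' :: Q)) :
      Exec (A ++ s :: s :: B) (P ++ j1 :: j2 :: Q)

/-- The web tensor of an execution, as coordinates with respect to the basis
`e^S_J` of `V^S`: `web e L` is the coefficient of `e^S_L`. -/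
def web : {S : List Bool} → {J : List St} → Exec S J → List St → K
  | _, _, .nil, L => if L = [] then 1 else 0
  | _, _, .hstep A _ _ _ s1 _ _ _ _ _ _ _ _ e, L =>
      match L.drop A.length with
      | a :: b :: R =>
          ∑ c : St, ∑ d : St,
            (if s1 then HCpm a b c d else HCmp a b c d) *
              web e (L.take A.length ++ c :: d :: R)
      | _ => 0
  | _, _, .ustep A _ _ _ s1 _ _ _ e, L =>
      match L.drop A.length with
      | a :: b :: R => (if s1 then bCpm a b else bCmp a b) * web e (L.take A.length ++ R)
      | _ => 0
  | _, _, .ystep A _ _ _ s _ _ _ _ _ e, L =>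
      match L.drop A.length with
      | a :: b :: R =>
          ∑ c : St, (if s then tYpp a b c else tYmm a b c) * web e (L.take A.length ++ c :: R)
      | _ => 0

/-- `c ∈ v⁻¹ ℤ[v⁻¹]`: a polynomial in `v⁻¹` with zero constant term. -/
def ZeroConst (c : K) : Prop :=
  ∃ p : Polynomial ℤ, p.coeff 0 = 0 ∧ c = Polynomial.aeval v⁻¹ p

/-- `x` has the negative-exponent property relative to a state string `J`
(`n` is the length of the ambient sign string). -/
def NegExpProp (n : ℕ) (x : List St → K) (J : List St) : Prop :=
  x J = 1 ∧ ∀ J' : List St, J'.length = n → J' ≠ J → ZeroConst (x J')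

/-- `c ∈ ℕ[v, v⁻¹]`: a Laurent polynomial with nonnegative integer
coefficients. -/
def IsNatLaurent (c : K) : Prop :=
  ∃ (p : Polynomial ℕ) (m : ℕ), c = v⁻¹ ^ m * Polynomial.aeval v p

/-- `c ∈ ℤ[v⁻¹]`. -/
def InZInv (c : K) : Prop := ∃ p : Polynomial ℤ, c = Polynomial.aeval v⁻¹ p

/-- Property P: all coefficients lie in `ℤ[v⁻¹]` and at most one of them has a
nonzero constant term. -/
def PropP (n : ℕ) (x : List St → K) : Prop :=
  (∀ J : List St, J.length = n → InZInv (x J)) ∧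
  ∀ J1 J2 : List St, J1.length = n → J2.length = n →
    ¬ ZeroConst (x J1) → ¬ ZeroConst (x J2) → J1 = J2

/-- The sign string `(+,+,−,−,+,+,−,−,+,+,−,−)`. -/
def base : List Bool :=
  [true, true, false, false, true, true, false, false, true, true, false, false]

namespace WebGrowth

/-- A sign string zipped with a state string of the same length. -/
abbrev Word : Type := List (Bool × St)

/-- The state string of a word. -/
abbrev states (W : Word) : List St := W.map Prod.snd

/-- Coordinates, with respect to the bases `e^S_J`, of a tensor in some `V^S`. The sign string is
left out: the maps attached to the growth rules have the same matrices for both signs. -/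
abbrev Tensor : Type := List St → K

/-- Contraction of the first factors of a tensor with the dual basis vectors of `t`. -/
def slice (t : List St) : Tensor →ₗ[K] Tensor := LinearMap.funLeft K K (t ++ ·)

@[simp]
theorem slice_apply (t : List St) (x : Tensor) (L : List St) : slice t x L = x (t ++ L) := rfl

/-- The map `id ⊗ T`, with one additional factor on the left. -/
def lift (T : Tensor →ₗ[K] Tensor) : Tensor →ₗ[K] Tensor where
  toFun x
    | [] => 0
    | a :: L => T (slice [a] x) L
  map_add' x y := by
    ext (_ | ⟨a, L⟩) <;> simp
  map_smul' c x := by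
    ext (_ | ⟨a, L⟩) <;> simp

@[simp]
theorem lift_nil (T : Tensor →ₗ[K] Tensor) (x : Tensor) : lift T x [] = 0 := rfl

@[simp]
theorem lift_cons (T : Tensor →ₗ[K] Tensor) (x : Tensor) (a : St) (L : List St) :
    lift T x (a :: L) = T (slice [a] x) L := rfl

theorem lift_comp (T U : Tensor →ₗ[K] Tensor) : lift (T ∘ₗ U) = lift T ∘ₗ lift U := by
  ext x (_ | ⟨a, L⟩) <;> rfl

theorem comp_slice (T : Tensor →ₗ[K] Tensor) (t : List St) :
    T ∘ₗ slice t = slice t ∘ₗ lift^[t.length] T := by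
  induction t generalizing T with
  | nil => rfl
  | cons a t ih =>
    calc T ∘ₗ slice (a :: t) = (T ∘ₗ slice t) ∘ₗ slice [a] := rfl
      _ = slice t ∘ₗ lift^[t.length] T ∘ₗ slice [a] := by rw [ih, LinearMap.comp_assoc]
      _ = slice (a :: t) ∘ₗ lift^[(a :: t).length] T := by
        ext x L
        simp [-Function.iterate_succ, Function.iterate_succ_apply']

/-- The three kinds of growth rules. -/
inductive Kind where
  | u : Kind
  | y : Kind
  | h : Kind

/-- The number of letters by which a rule of the given kind replaces a pair of letters. -/
def Kind.out : Kind → ℕ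
  | .u => 0
  | .y => 1
  | .h => 2

/-- The rows of the maps `b`, `t` and `H`: `row κ a b` is the coefficient of `e_a ⊗ e_b` in the
image of a tensor under the map of kind `κ`, acting on its first factors. -/
def row : Kind → St → St → Tensor →ₗ[K] Tensor
  | .u, .pos, .neg => slice []
  | .u, .zero, .zero => v⁻¹ • slice []
  | .u, .neg, .pos => v⁻¹ ^ 2 • slice []
  | .u, _, _ => 0
  | .y, .pos, .zero => slice [.pos]
  | .y, .zero, .pos => v⁻¹ • slice [.pos]
  | .y, .pos, .neg => slice [.zero]
  | .y, .neg, .pos => v⁻¹ • slice [.zero]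
  | .y, .zero, .neg => slice [.neg]
  | .y, .neg, .zero => v⁻¹ • slice [.neg]
  | .y, _, _ => 0
  | .h, .pos, .neg => v • slice [.pos, .neg] + slice [.zero, .zero]
  | .h, .zero, .zero => slice [.pos, .neg] + slice [.neg, .pos]
  | .h, .neg, .pos => slice [.zero, .zero] + v⁻¹ • slice [.neg, .pos]
  | .h, a, b => slice [b, a]

/-- The map of kind `κ` acting on the first factors of a tensor. -/
def localMap (κ : Kind) : Tensor →ₗ[K] Tensor where
  toFun x
    | a :: b :: L => row κ a b x L
    | _ => 0
  map_add' x y := by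
    ext (_ | ⟨a, _ | ⟨b, L⟩⟩) <;> simp
  map_smul' c x := by
    ext (_ | ⟨a, _ | ⟨b, L⟩⟩) <;> simp

@[simp]
theorem localMap_nil (κ : Kind) (x : Tensor) : localMap κ x [] = 0 := rfl

@[simp]
theorem localMap_singleton (κ : Kind) (x : Tensor) (a : St) : localMap κ x [a] = 0 := rfl

@[simp]
theorem localMap_cons_cons (κ : Kind) (x : Tensor) (a b : St) (L : List St) :
    localMap κ x (a :: b :: L) = row κ a b x L := rfl

theorem comp_row (T : Tensor →ₗ[K] Tensor) (κ : Kind) (a b : St) :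
    T ∘ₗ row κ a b = row κ a b ∘ₗ lift^[κ.out] T := by
  cases κ <;> cases a <;> cases b <;>
    simp [row, Kind.out, LinearMap.comp_add, LinearMap.add_comp, LinearMap.comp_smul,
      LinearMap.smul_comp, comp_slice]

theorem localMap_comp_lift_iterate (T : Tensor →ₗ[K] Tensor) (κ : Kind) :
    localMap κ ∘ₗ lift^[κ.out] T = lift (lift T) ∘ₗ localMap κ := by
  ext x (_ | ⟨a, _ | ⟨b, L⟩⟩)
  · rfl
  · rfl
  · exact congrFun (LinearMap.congr_fun (comp_row T κ a b).symm x) L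

theorem lift_iterate_localMap_apply (k : ℕ) (κ : Kind) (x : Tensor) (L : List St) :
    lift^[k] (localMap κ) x L =
      match L.drop k with
      | a :: b :: R => row κ a b (slice (L.take k) x) R
      | _ => 0 := by
  induction k generalizing x L with
  | zero => rcases L with _ | ⟨a, _ | ⟨b, R⟩⟩ <;> rfl
  | succ k ih =>
    rw [Function.iterate_succ_apply']
    cases L with
    | nil => rfl
    | cons a L => exact ih (slice [a] x) L

/-! ### The diamond lemma -/

/-- `Rule κ p q o`: a growth rule of kind `κ` rewrites the adjacent letters `p, q` to `o`. -/
inductive Rule : Kind → Bool × St → Bool × St → Word → Prop where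
  | u (s : Bool) : Rule .u (s, .pos) (!s, .neg) []
  | y (s : Bool) {j₁ j₂ j : St} (hp : YPat j₁ j₂ j) : Rule .y (s, j₁) (s, j₂) [(!s, j)]
  | h (s : Bool) {j₁ j₂ i₁ i₂ : St} (hp : HPat j₁ j₂ i₁ i₂) :
      Rule .h (s, j₁) (!s, j₂) [(!s, i₁), (s, i₂)]

theorem Rule.length_eq {κ : Kind} {p q : Bool × St} {o : Word} (h : Rule κ p q o) :
    o.length = κ.out := by
  cases h <;> rfl

theorem Rule.unique {κ κ' : Kind} {p q : Bool × St} {o o' : Word} (h : Rule κ p q o)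
    (h' : Rule κ' p q o') : κ = κ' ∧ o = o' := by
  cases h with
  | u s => cases s <;> cases h' <;> (try rename_i hp; cases hp) <;> exact ⟨rfl, rfl⟩
  | y s hp => cases hp <;> cases s <;> cases h' <;> rename_i hp' <;> cases hp' <;> exact ⟨rfl, rfl⟩
  | h s hp =>
    cases hp <;> cases s <;> cases h' <;> rename_i hp' <;> cases hp' <;> exact ⟨rfl, rfl⟩

/-- `Rewrites T W W'`: some growth rule rewrites `W` to `W'`, and `T` is the map that recovers the
web tensors of `W` from those of `W'`. -/
inductive Rewrites : (Tensor →ₗ[K] Tensor) → Word → Word → Prop where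
  | head {κ : Kind} {p q : Bool × St} {o : Word} (h : Rule κ p q o) (B : Word) :
      Rewrites (localMap κ) (p :: q :: B) (o ++ B)
  | cons {T : Tensor →ₗ[K] Tensor} {W W' : Word} (p : Bool × St) (h : Rewrites T W W') :
      Rewrites (lift T) (p :: W) (p :: W')

theorem Rewrites.append {T : Tensor →ₗ[K] Tensor} {W W' : Word} (A : Word)
    (h : Rewrites T W W') : Rewrites (lift^[A.length] T) (A ++ W) (A ++ W') := by
  induction A with
  | nil => exact h
  | cons p A ih =>
    rw [List.length_cons, Function.iterate_succ_apply']
    exact ih.cons p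

/-- Two rewritings of a word, to `W₁` with the map `T₁` and to `W₂` with the map `T₂`, are joinable
if they coincide or one further rewriting on each side leads to a common word, with equal composite
maps. -/
def Joinable (T₁ : Tensor →ₗ[K] Tensor) (W₁ : Word) (T₂ : Tensor →ₗ[K] Tensor) (W₂ : Word) :
    Prop :=
  (T₁ = T₂ ∧ W₁ = W₂) ∨
    ∃ U₁ U₂ W, Rewrites U₁ W₁ W ∧ Rewrites U₂ W₂ W ∧ T₁ ∘ₗ U₁ = T₂ ∘ₗ U₂

theorem Joinable.symm {T₁ T₂ : Tensor →ₗ[K] Tensor} {W₁ W₂ : Word}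
    (h : Joinable T₁ W₁ T₂ W₂) : Joinable T₂ W₂ T₁ W₁ := by
  rcases h with ⟨rfl, rfl⟩ | ⟨U₁, U₂, W, h₁, h₂, e⟩
  · exact .inl ⟨rfl, rfl⟩
  · exact .inr ⟨U₂, U₁, W, h₂, h₁, e.symm⟩

theorem Joinable.cons {T₁ T₂ : Tensor →ₗ[K] Tensor} {W₁ W₂ : Word} (p : Bool × St)
    (h : Joinable T₁ W₁ T₂ W₂) : Joinable (lift T₁) (p :: W₁) (lift T₂) (p :: W₂) := by
  rcases h with ⟨rfl, rfl⟩ | ⟨U₁, U₂, W, h₁, h₂, e⟩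
  · exact .inl ⟨rfl, rfl⟩
  · exact .inr ⟨_, _, _, h₁.cons p, h₂.cons p, by rw [← lift_comp, e, lift_comp]⟩

theorem v_ne_zero : v ≠ 0 := RatFunc.X_ne_zero

theorem y_comp_u : localMap .y ∘ₗ localMap .u = lift (localMap .y) ∘ₗ localMap .u := by
  ext x (_ | ⟨a, _ | ⟨b, _ | ⟨c, L⟩⟩⟩)
  case cons.cons.cons =>
    cases a <;> cases b <;> cases c <;> simp [row] <;> ring
  case cons.cons.nil => cases a <;> cases b <;> simp [row]
  all_goals rfl

theorem y_comp_y : localMap .y ∘ₗ localMap .y = lift (localMap .h) ∘ₗ localMap .u := by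
  ext x (_ | ⟨a, _ | ⟨b, _ | ⟨c, L⟩⟩⟩)
  case cons.cons.cons =>
    cases a <;> cases b <;> cases c <;> simp [row] <;> field_simp
  case cons.cons.nil => cases a <;> cases b <;> simp [row]
  all_goals rfl

theorem h_comp_lift_u :
    localMap .h ∘ₗ lift (localMap .u) = lift (localMap .y) ∘ₗ localMap .y := by
  ext x (_ | ⟨a, _ | ⟨b, _ | ⟨c, L⟩⟩⟩)
  case cons.cons.cons =>
    cases a <;> cases b <;> cases c <;> simp [row] <;> field_simp
  case cons.cons.nil => cases a <;> cases b <;> simp [row]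
  all_goals rfl

theorem h_comp_lift_y :
    localMap .h ∘ₗ lift (localMap .y) = lift (localMap .h) ∘ₗ localMap .y := by
  ext x (_ | ⟨a, _ | ⟨b, _ | ⟨c, L⟩⟩⟩)
  case cons.cons.cons =>
    cases a <;> cases b <;> cases c <;> simp [row, v_ne_zero]
  case cons.cons.nil => cases a <;> cases b <;> simp [row]
  all_goals rfl

theorem Joinable.overlap_y {κ : Kind} {s : Bool} {r : Bool × St} {j₁ j₂ j : St} {o : Word}
    (hp : YPat j₁ j₂ j) (h : Rule κ (s, j₂) r o) (B : Word) :
    Joinable (localMap .y) ((!s, j) :: r :: B) (lift (localMap κ)) ((s, j₁) :: (o ++ B)) := by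
  right
  cases h with
  | u => cases hp
  | y _ hp' =>
    cases hp <;> cases hp'
    cases s <;> exact ⟨_, _, _, .head (.u _) B, .head (.u _) B, y_comp_u⟩
  | h _ hp' =>
    cases hp <;> cases hp'
    · cases s <;> exact ⟨_, _, _, .head (.y _ .y1) B, .head (.u _) _, y_comp_y⟩
    · cases s <;> exact ⟨_, _, _, .head (.y _ .y2) B, .head (.u _) _, y_comp_y⟩

theorem Joinable.overlap_h {κ : Kind} {s : Bool} {r : Bool × St} {j₁ j₂ i₁ i₂ : St} {o : Word}
    (hp : HPat j₁ j₂ i₁ i₂) (h : Rule κ (!s, j₂) r o) (B : Word) :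
    Joinable (localMap .h) ((!s, i₁) :: (s, i₂) :: r :: B) (lift (localMap κ))
      ((s, j₁) :: (o ++ B)) := by
  right
  cases h with
  | u => cases hp
  | y _ hp' =>
    cases hp <;> cases hp'
    · cases s <;> exact ⟨_, _, _, .cons _ (.head (.u _) B), .head (.y _ .y2) B, h_comp_lift_u⟩
    · cases s <;> exact ⟨_, _, _, .cons _ (.head (.u _) B), .head (.y _ .y3) B, h_comp_lift_u⟩
  | h _ hp' =>
    cases hp <;> cases hp'
    · cases s <;>
        exact ⟨_, _, _, .cons _ (.head (.y _ .y1) B), .head (.y _ .y2) _, h_comp_lift_y⟩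
    · cases s <;>
        exact ⟨_, _, _, .cons _ (.head (.y _ .y2) B), .head (.y _ .y2) _, h_comp_lift_y⟩
    · cases s <;>
        exact ⟨_, _, _, .cons _ (.head (.y _ .y1) B), .head (.y _ .y3) _, h_comp_lift_y⟩
    · cases s <;>
        exact ⟨_, _, _, .cons _ (.head (.y _ .y2) B), .head (.y _ .y3) _, h_comp_lift_y⟩

theorem Joinable.overlap {κ κ' : Kind} {p q r : Bool × St} {o o' : Word} (h : Rule κ p q o)
    (h' : Rule κ' q r o') (B : Word) :
    Joinable (localMap κ) (o ++ r :: B) (lift (localMap κ')) (p :: (o' ++ B)) := by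
  cases h with
  | u => cases h' <;> rename_i hp <;> cases hp
  | y _ hp => exact overlap_y hp h' B
  | h _ hp => exact overlap_h hp h' B

theorem Joinable.of_head {κ : Kind} {p q : Bool × St} {o B W₂ : Word} {U : Tensor →ₗ[K] Tensor}
    (h : Rule κ p q o) (h₂ : Rewrites U (p :: q :: B) W₂) :
    Joinable (localMap κ) (o ++ B) U W₂ := by
  rcases h₂ with ⟨h', _⟩ | ⟨_, h₂⟩
  · obtain ⟨rfl, rfl⟩ := h.unique h'
    exact .inl ⟨rfl, rfl⟩
  rcases h₂ with ⟨h', B⟩ | ⟨_, h₂⟩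
  · exact overlap h h' B
  · refine .inr ⟨_, _, _, h₂.append o, .head h _, ?_⟩
    rw [h.length_eq, localMap_comp_lift_iterate]

theorem Rewrites.diamond {T₁ T₂ : Tensor →ₗ[K] Tensor} {W W₁ W₂ : Word} (h₁ : Rewrites T₁ W W₁)
    (h₂ : Rewrites T₂ W W₂) : Joinable T₁ W₁ T₂ W₂ := by
  induction h₁ generalizing T₂ W₂ with
  | head h B => exact .of_head h h₂
  | cons p h₁ ih =>
    cases h₂ with
    | head h B => exact (Joinable.of_head h (h₁.cons p)).symm
    | cons _ h₂ => exact (ih h₂).cons p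

/-- `IsWebTensor W x`: some complete execution of the growth algorithm from `W` has the web tensor
`x`. -/
inductive IsWebTensor : Word → Tensor → Prop where
  | nil : IsWebTensor [] (Pi.single [] 1)
  | step {T : Tensor →ₗ[K] Tensor} {W W' : Word} {x : Tensor} (h : Rewrites T W W')
      (hx : IsWebTensor W' x) : IsWebTensor W (T x)

theorem IsWebTensor.exchange {W W₂ : Word} {x : Tensor} {U : Tensor →ₗ[K] Tensor}
    (hx : IsWebTensor W x) (hU : Rewrites U W W₂) : ∃ y, IsWebTensor W₂ y ∧ x = U y := by
  induction hx generalizing U W₂ with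
  | nil => cases hU
  | step hT hx ih =>
    rcases hT.diamond hU with ⟨rfl, rfl⟩ | ⟨T', U', W', hT', hU', e⟩
    · exact ⟨_, hx, rfl⟩
    · obtain ⟨y, hy, rfl⟩ := ih hT'
      exact ⟨U' y, .step hU' hy, LinearMap.congr_fun e y⟩

/-! ### Unitriangularity -/

/-- The order `-1 < 0 < 1`, so that lists of states carry the lexicographic order. -/
instance : LT St := ⟨stLt⟩

theorem lt_def {a b : St} : a < b ↔ stval a < stval b := .rfl

/-- The lexicographically largest basis tensor occurring in `x` is the one of `J`, and its
coefficient is `1`. -/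
structure IsUnitriangular (x : Tensor) (J : List St) : Prop where
  apply_self : x J = 1
  apply_of_lt : ∀ L, J < L → x L = 0

theorem IsUnitriangular.localMap {κ : Kind} {p q : Bool × St} {o B : Word} {x : Tensor}
    (h : Rule κ p q o) (hx : IsUnitriangular x (states (o ++ B))) :
    IsUnitriangular (localMap κ x) (states (p :: q :: B)) := by
  obtain ⟨hself, hlt⟩ := hx
  constructor
  · rcases h with _ | ⟨_, hp⟩ | ⟨_, hp⟩
    · simpa [row] using hself
    · cases hp <;> simpa [row] using hself
    · cases hp <;> simp_all [row, List.cons_lt_cons_iff, lt_def, stval]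
  · rintro (_ | ⟨a, _ | ⟨b, L⟩⟩) hL
    · rfl
    · rfl
    · rcases h with _ | ⟨_, hp⟩ | ⟨_, hp⟩
      · cases a <;> cases b <;> simp_all [row, List.cons_lt_cons_iff, lt_def, stval]
      · cases hp <;> cases a <;> cases b <;>
          simp_all [row, List.cons_lt_cons_iff, lt_def, stval]
      · cases hp <;> cases a <;> cases b <;>
          simp_all [row, List.cons_lt_cons_iff, lt_def, stval]

theorem IsUnitriangular.slice {x : Tensor} {c : St} {J : List St}
    (hx : IsUnitriangular x (c :: J)) : IsUnitriangular (slice [c] x) J :=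
  ⟨hx.apply_self, fun _ hL => hx.apply_of_lt _ (List.cons_lt_cons_iff.2 (.inr ⟨rfl, hL⟩))⟩

theorem IsUnitriangular.rewrites {T : Tensor →ₗ[K] Tensor} {W W' : Word} {x : Tensor}
    (h : Rewrites T W W') (hx : IsUnitriangular x (states W')) :
    IsUnitriangular (T x) (states W) := by
  induction h generalizing x with
  | head h B => exact hx.localMap h
  | @cons T _ _ p _ ih =>
    refine ⟨(ih hx.slice).apply_self, ?_⟩
    rintro (_ | ⟨a, L⟩) hL
    · rfl
    rcases List.cons_lt_cons_iff.1 hL with hp | ⟨rfl, hJ⟩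
    · have : WebGrowth.slice [a] x = 0 := by
        ext L
        exact hx.apply_of_lt _ (List.cons_lt_cons_iff.2 (.inl hp))
      rw [lift_cons, this, map_zero, Pi.zero_apply]
    · exact (ih hx.slice).apply_of_lt L hJ

theorem IsWebTensor.isUnitriangular {W : Word} {x : Tensor} (hx : IsWebTensor W x) :
    IsUnitriangular x (states W) := by
  induction hx with
  | nil =>
    refine ⟨Pi.single_eq_same _ _, fun L hL => Pi.single_eq_of_ne ?_ _⟩
    rintro rfl
    cases hL
  | step h _ ih => exact ih.rewrites h

/-! ### The crystal limit -/

/-- `v⁻¹ ℤ[v⁻¹]` as an additive subgroup of `K`. -/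
def zeroConst : AddSubgroup K where
  carrier := {c | ZeroConst c}
  zero_mem' := ⟨0, by simp⟩
  add_mem' := by
    rintro _ _ ⟨p, hp, rfl⟩ ⟨q, hq, rfl⟩
    exact ⟨p + q, by simp [hp, hq], (map_add _ p q).symm⟩
  neg_mem' := by
    rintro _ ⟨p, hp, rfl⟩
    exact ⟨-p, by simp [hp], (map_neg _ p).symm⟩

theorem inv_v_mem_zeroConst : v⁻¹ ∈ zeroConst := ⟨.X, by simp⟩

theorem mul_mem_zeroConst {a b : K} (ha : a ∈ zeroConst) (hb : b ∈ zeroConst) :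
    a * b ∈ zeroConst := by
  obtain ⟨p, hp, rfl⟩ := ha
  obtain ⟨q, -, rfl⟩ := hb
  exact ⟨p * q, by simp [Polynomial.mul_coeff_zero, hp], (map_mul _ p q).symm⟩

theorem inv_v_mul_mem_zeroConst {c : K} (hc : c ∈ zeroConst) : v⁻¹ * c ∈ zeroConst :=
  mul_mem_zeroConst inv_v_mem_zeroConst hc

theorem inv_v_sq_mul_mem_zeroConst {c : K} (hc : c ∈ zeroConst) : v⁻¹ ^ 2 * c ∈ zeroConst := by
  rw [sq, mul_assoc]
  exact inv_v_mul_mem_zeroConst (inv_v_mul_mem_zeroConst hc)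

/-- The tensors all of whose coordinates lie in `v⁻¹ ℤ[v⁻¹]`. -/
def negLattice : AddSubgroup Tensor := AddSubgroup.pi Set.univ fun _ => zeroConst

theorem mem_negLattice {x : Tensor} : x ∈ negLattice ↔ ∀ L, x L ∈ zeroConst :=
  ⟨fun h L => h L trivial, fun h L _ => h L⟩

/-- `T` is regular at `v = ∞` and maps there the basis tensor of `J'` to that of `J`. -/
structure IsCrystalMap (T : Tensor →ₗ[K] Tensor) (J' J : List St) : Prop where
  map_mem : ∀ x ∈ negLattice, T x ∈ negLattice
  map_single : T (Pi.single J' 1) - Pi.single J 1 ∈ negLattice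

theorem IsCrystalMap.sub_single_mem {T : Tensor →ₗ[K] Tensor} {J' J : List St}
    (hT : IsCrystalMap T J' J) {x : Tensor} (hx : x - Pi.single J' 1 ∈ negLattice) :
    T x - Pi.single J 1 ∈ negLattice := by
  have h := add_mem (hT.map_mem _ hx) hT.map_single
  rwa [map_sub, sub_add_sub_cancel] at h

theorem slice_mem_negLattice {x : Tensor} (hx : x ∈ negLattice) (t : List St) :
    slice t x ∈ negLattice :=
  mem_negLattice.2 fun L => mem_negLattice.1 hx (t ++ L)

theorem slice_single (a c : St) (J : List St) :
    slice [a] (Pi.single (c :: J) 1) = if a = c then Pi.single J 1 else 0 := by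
  ext L
  by_cases h : a = c <;> simp [Pi.single_apply, h]

theorem IsCrystalMap.lift {T : Tensor →ₗ[K] Tensor} {J' J : List St} (hT : IsCrystalMap T J' J)
    (c : St) : IsCrystalMap (lift T) (c :: J') (c :: J) where
  map_mem x hx := by
    refine mem_negLattice.2 ?_
    rintro (_ | ⟨a, L⟩)
    · exact zero_mem _
    · exact mem_negLattice.1 (hT.map_mem _ (slice_mem_negLattice hx [a])) L
  map_single := by
    refine mem_negLattice.2 ?_
    rintro (_ | ⟨a, L⟩)
    · simp [zero_mem]
    · by_cases h : a = c
      · simpa [slice_single, h, Pi.single_apply] using mem_negLattice.1 hT.map_single L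
      · simp [slice_single, h, zero_mem]

theorem isCrystalMap_u (B : List St) : IsCrystalMap (localMap .u) B (.pos :: .neg :: B) where
  map_mem x hx := by
    rw [mem_negLattice] at hx ⊢
    rintro (_ | ⟨a, _ | ⟨b, L⟩⟩)
    case cons.cons =>
      cases a <;> cases b <;>
        simp [row, zero_mem, hx, inv_v_mul_mem_zeroConst, -inv_pow, inv_v_sq_mul_mem_zeroConst]
    all_goals exact zero_mem _
  map_single := by
    rw [mem_negLattice]
    rintro (_ | ⟨a, _ | ⟨b, L⟩⟩)
    case cons.cons =>
      by_cases h : L = B <;> cases a <;> cases b <;>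
        simp [row, zero_mem, h, inv_v_mem_zeroConst, sq, mul_mem_zeroConst]
    all_goals simp [zero_mem]

theorem isCrystalMap_y {j₁ j₂ j : St} (hp : YPat j₁ j₂ j) (B : List St) :
    IsCrystalMap (localMap .y) (j :: B) (j₁ :: j₂ :: B) where
  map_mem x hx := by
    rw [mem_negLattice] at hx ⊢
    rintro (_ | ⟨a, _ | ⟨b, L⟩⟩)
    case cons.cons =>
      cases a <;> cases b <;> simp [row, zero_mem, hx, inv_v_mul_mem_zeroConst]
    all_goals exact zero_mem _
  map_single := by
    rw [mem_negLattice]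
    rintro (_ | ⟨a, _ | ⟨b, L⟩⟩)
    case cons.cons =>
      by_cases h : L = B <;> cases hp <;> cases a <;> cases b <;>
        simp [row, zero_mem, h, inv_v_mem_zeroConst]
    all_goals simp [zero_mem]

/-- State patterns of an H-rule followed by a Y-rule on three letters with alternating signs: the
states `j₁, j₂, j₃` are replaced by `i₁, i₂`. -/
inductive HYPat : St → St → St → St → St → Prop where
  | left {j₁ j₂ j₃ i₁ i₂ k : St} (h : HPat j₁ j₂ i₁ k) (h' : YPat k j₃ i₂) : HYPat j₁ j₂ j₃ i₁ i₂
  | right {j₁ j₂ j₃ i₁ i₂ k : St} (h : HPat j₂ j₃ k i₂) (h' : YPat j₁ k i₁) : HYPat j₁ j₂ j₃ i₁ i₂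

/-- The only entry of the H-map with a positive exponent is the `v` on the states `(1, -1)`. It is
compensated by the factor `v⁻¹` which every coefficient of `t` with first state `-1` carries. -/
theorem h_lift_y_mem_negLattice {x : Tensor} (hx : x ∈ negLattice) :
    localMap .h (lift (localMap .y) x) ∈ negLattice := by
  rw [mem_negLattice] at hx ⊢
  rintro (_ | ⟨a, _ | ⟨b, _ | ⟨c, L⟩⟩⟩)
  case cons.cons.cons =>
    cases a <;> cases b <;> cases c <;>
      simp [row, zero_mem, hx, inv_v_mul_mem_zeroConst, add_mem, v_ne_zero]
  case cons.cons.nil => cases a <;> cases b <;> simp [row, zero_mem]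
  all_goals exact zero_mem _

theorem isCrystalMap_hy {j₁ j₂ j₃ i₁ i₂ : St} (hp : HYPat j₁ j₂ j₃ i₁ i₂) (B : List St) :
    IsCrystalMap (localMap .h ∘ₗ lift (localMap .y)) (i₁ :: i₂ :: B) (j₁ :: j₂ :: j₃ :: B) where
  map_mem _ hx := h_lift_y_mem_negLattice hx
  map_single := by
    rw [mem_negLattice]
    rintro (_ | ⟨a, _ | ⟨b, _ | ⟨c, L⟩⟩⟩)
    case cons.cons.cons =>
      by_cases h : L = B <;> rcases hp with ⟨h₁, h₂⟩ | ⟨h₁, h₂⟩ <;> cases h₁ <;> cases h₂ <;>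
        cases a <;> cases b <;> cases c <;>
        simp [row, zero_mem, h, inv_v_mem_zeroConst, slice_single]
    case cons.cons.nil => cases a <;> cases b <;> simp [row, zero_mem]
    all_goals simp [zero_mem]

/-- `Reduces T W W'`: one or two growth rules shorten `W` to `W'`, and the map `T` recovering the
web tensors of `W` from those of `W'` is a crystal map. An H-rule followed by a U-rule is left out:
three letters allowing it also allow a Y-rule. -/
inductive Reduces : (Tensor →ₗ[K] Tensor) → Word → Word → Prop where
  | u (s : Bool) (B : Word) : Reduces (localMap .u) ((s, .pos) :: (!s, .neg) :: B) B
  | y (s : Bool) {j₁ j₂ j : St} (hp : YPat j₁ j₂ j) (B : Word) :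
      Reduces (localMap .y) ((s, j₁) :: (s, j₂) :: B) ((!s, j) :: B)
  | hy (s : Bool) {j₁ j₂ j₃ i₁ i₂ : St} (hp : HYPat j₁ j₂ j₃ i₁ i₂) (B : Word) :
      Reduces (localMap .h ∘ₗ lift (localMap .y)) ((s, j₁) :: (!s, j₂) :: (s, j₃) :: B)
        ((!s, i₁) :: (!s, i₂) :: B)
  | cons {T : Tensor →ₗ[K] Tensor} {W W' : Word} (p : Bool × St) (h : Reduces T W W') :
      Reduces (lift T) (p :: W) (p :: W')

theorem Reduces.length_lt {T : Tensor →ₗ[K] Tensor} {W W' : Word} (h : Reduces T W W') :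
    W'.length < W.length := by
  induction h with
  | cons _ _ ih => simpa using ih
  | _ => simp

theorem Reduces.isCrystalMap {T : Tensor →ₗ[K] Tensor} {W W' : Word} (h : Reduces T W W') :
    IsCrystalMap T (states W') (states W) := by
  induction h with
  | u _ B => exact isCrystalMap_u (states B)
  | y _ hp B => exact isCrystalMap_y hp (states B)
  | hy _ hp B => exact isCrystalMap_hy hp (states B)
  | cons p _ ih => exact ih.lift p.2

theorem Reduces.rewrites {T : Tensor →ₗ[K] Tensor} {W W' : Word} (h : Reduces T W W') :
    Rewrites T W W' ∨
      ∃ T₁ T₂ V, Rewrites T₁ W V ∧ Rewrites T₂ V W' ∧ T = T₁ ∘ₗ T₂ := by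
  induction h with
  | u s B => exact .inl (.head (.u s) B)
  | y s hp B => exact .inl (.head (.y s hp) B)
  | hy s hp B =>
    right
    cases hp with
    | left h h' => exact ⟨_, _, _, .head (.h s h) _, .cons _ (.head (.y s h') B), rfl⟩
    | right h h' =>
      cases s <;>
        exact ⟨_, _, _, .cons _ (.head (.h _ h) B), .head (.y _ h') _, h_comp_lift_y⟩
  | cons p _ ih =>
    rcases ih with h | ⟨T₁, T₂, V, h₁, h₂, rfl⟩
    · exact .inl (h.cons p)
    · exact .inr ⟨_, _, _, h₁.cons p, h₂.cons p, lift_comp T₁ T₂⟩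

theorem IsWebTensor.exchange_reduces {T : Tensor →ₗ[K] Tensor} {W W' : Word} {x : Tensor}
    (hx : IsWebTensor W x) (h : Reduces T W W') : ∃ y, IsWebTensor W' y ∧ x = T y := by
  rcases h.rewrites with h | ⟨T₁, T₂, V, h₁, h₂, rfl⟩
  · exact hx.exchange h
  · obtain ⟨y, hy, rfl⟩ := hx.exchange h₁
    obtain ⟨z, hz, rfl⟩ := hy.exchange h₂
    exact ⟨z, hz, rfl⟩

/-! ### Dominance -/

/-- The point at which the lattice path of a word has to start in order to end at the origin. -/
def startPoint : Word → ℤ × ℤ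
  | [] => 0
  | p :: W => startPoint W - wt p.1 p.2

/-- The lattice path of a word, when it ends at the origin, stays in the dominant chamber. -/
def InChamber : Word → Prop
  | [] => True
  | p :: W => 0 ≤ startPoint (p :: W) ∧ InChamber W

theorem Rewrites.startPoint_eq {T : Tensor →ₗ[K] Tensor} {W W' : Word} (h : Rewrites T W W') :
    startPoint W = startPoint W' := by
  induction h with
  | head h B =>
    rcases h with s | ⟨s, hp⟩ | ⟨s, hp⟩ <;> cases s <;> (try cases hp) <;>
      simp [startPoint, wt, Prod.ext_iff, sub_sub]
  | cons p _ ih => rw [startPoint, startPoint, ih]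

theorem InChamber.startPoint_nonneg {W : Word} (h : InChamber W) : 0 ≤ startPoint W := by
  cases W with
  | nil => exact le_rfl
  | cons p W => exact h.1

theorem Rewrites.inChamber {T : Tensor →ₗ[K] Tensor} {W W' : Word} (h : Rewrites T W W')
    (hW' : InChamber W') : InChamber W := by
  induction h with
  | @head _ _ _ o h B =>
    obtain ⟨hB, ho⟩ : InChamber B ∧ 0 ≤ startPoint (o.tail ++ B) := by
      cases h
      exacts [⟨hW', hW'.startPoint_nonneg⟩, ⟨hW'.2, hW'.2.startPoint_nonneg⟩,
        ⟨hW'.2.2, hW'.2.startPoint_nonneg⟩]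
    have h₀ := hW'.startPoint_nonneg
    refine ⟨(Rewrites.head h B).startPoint_eq ▸ h₀, ?_, hB⟩
    rcases h with s | ⟨s, hp⟩ | ⟨s, hp⟩ <;> cases s <;> (try cases hp) <;>
      simp only [List.nil_append, List.cons_append, List.tail_nil, List.tail_cons, startPoint, wt,
        Bool.not_true, Bool.not_false, Prod.le_def, Prod.fst_sub, Prod.snd_sub, Prod.fst_zero,
        Prod.snd_zero] at h₀ ho ⊢ <;>
      omega
  | cons p h ih => exact ⟨(h.cons p).startPoint_eq ▸ hW'.1, ih hW'.2⟩

theorem IsWebTensor.startPoint_eq_zero {W : Word} {x : Tensor} (hx : IsWebTensor W x) :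
    startPoint W = 0 := by
  induction hx with
  | nil => rfl
  | step h _ ih => rw [h.startPoint_eq, ih]

theorem IsWebTensor.inChamber {W : Word} {x : Tensor} (hx : IsWebTensor W x) : InChamber W := by
  induction hx with
  | nil => trivial
  | step h _ ih => exact h.inChamber ih

/-! ### Irreducible words -/

/-- A word is irreducible if no reduction `Reduces` applies to it. -/
def IsIrreducible (W : Word) : Prop := ∀ T W', ¬ Reduces T W W'

theorem IsIrreducible.of_cons {p : Bool × St} {W : Word} (h : IsIrreducible (p :: W)) :
    IsIrreducible W :=
  fun _ _ hW => h _ _ (hW.cons p)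

/-- Decides whether a U-rule or a Y-rule rewrites two adjacent letters. -/
def pairReducible : Bool × St → Bool × St → Bool
  | (_, .pos), (_, .neg) => true
  | (s, .pos), (t, .zero) => s == t
  | (s, .zero), (t, .neg) => s == t
  | _, _ => false

/-- Decides whether an H-rule followed by a Y-rule rewrites three adjacent letters. -/
def tripleReducible : Bool × St → Bool × St → Bool × St → Bool
  | (s, j₁), (t, j₂), (r, j₃) =>
    t == !s && r == s &&
      [(.pos, .zero, .zero), (.pos, .zero, .neg), (.zero, .zero, .zero), (.zero, .zero, .neg),
        (.zero, .neg, .neg), (St.pos, St.pos, St.zero)].elem (j₁, j₂, j₃)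

/-- Decides whether a word is reducible at its first letter. -/
def headReducible : Word → Bool
  | p :: q :: r :: _ => pairReducible p q || tripleReducible p q r
  | [p, q] => pairReducible p q
  | _ => false

theorem exists_reduces_of_pairReducible {p q : Bool × St} (h : pairReducible p q) (B : Word) :
    ∃ T W', Reduces T (p :: q :: B) W' := by
  obtain ⟨s, j₁⟩ := p
  obtain ⟨t, j₂⟩ := q
  by_cases hst : s = t
  · subst hst
    cases j₁ <;> cases j₂ <;> first | exact ⟨_, _, .y s (by constructor) B⟩ | cases h
  · obtain rfl : t = !s := Bool.eq_not.2 (Ne.symm hst)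
    cases j₁ <;> cases j₂ <;> simp [pairReducible] at h
    exact ⟨_, _, .u s B⟩

theorem exists_reduces_of_tripleReducible {p q r : Bool × St} (h : tripleReducible p q r)
    (B : Word) : ∃ T W', Reduces T (p :: q :: r :: B) W' := by
  obtain ⟨s, j₁⟩ := p
  obtain ⟨t, j₂⟩ := q
  obtain ⟨r, j₃⟩ := r
  simp only [tripleReducible, Bool.and_eq_true, beq_iff_eq, List.elem_eq_mem, List.mem_cons,
    Prod.mk.injEq, List.not_mem_nil, or_false, decide_eq_true_eq] at h
  obtain ⟨⟨rfl, rfl⟩, h⟩ := h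
  rcases h with ⟨rfl, rfl, rfl⟩ | ⟨rfl, rfl, rfl⟩ | ⟨rfl, rfl, rfl⟩ | ⟨rfl, rfl, rfl⟩ |
    ⟨rfl, rfl, rfl⟩ | ⟨rfl, rfl, rfl⟩
  exacts [⟨_, _, .hy r (.left .h1 .y1) B⟩, ⟨_, _, .hy r (.left .h1 .y2) B⟩,
    ⟨_, _, .hy r (.left .h2 .y1) B⟩, ⟨_, _, .hy r (.left .h2 .y2) B⟩,
    ⟨_, _, .hy r (.left .h3 .y3) B⟩, ⟨_, _, .hy r (.right .h1 .y1) B⟩]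

theorem IsIrreducible.headReducible_eq_false {W : Word} (h : IsIrreducible W) :
    headReducible W = false := by
  by_contra hW
  suffices ∃ T W', Reduces T W W' by
    obtain ⟨T, W', hT⟩ := this
    exact h T W' hT
  rcases W with _ | ⟨p, _ | ⟨q, _ | ⟨r, B⟩⟩⟩
  · exact absurd rfl hW
  · exact absurd rfl hW
  · exact exists_reduces_of_pairReducible (by simpa [headReducible] using hW) []
  · rcases Bool.or_eq_true_iff.1 (Bool.eq_true_of_not_eq_false hW) with hpq | hpqr
    · exact exists_reduces_of_pairReducible hpq (r :: B)
    · exact exists_reduces_of_tripleReducible hpqr B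

/-- The sum of the coordinates of the starting point. It bounds from below the number of letters
needed to reach that point from the origin. -/
def height (W : Word) : ℤ := (startPoint W).1 + (startPoint W).2

theorem height_le_height_cons (p : Bool × St) (W : Word) : height W ≤ height (p :: W) + 1 := by
  obtain ⟨s, j⟩ := p
  cases s <;> cases j <;> simp [height, startPoint, wt] <;> omega

/-- The words of length `n` that can be final segments of irreducible dominant words of length at
most `N`, as far as `headReducible` tells. -/
def irreducibleWords (N : ℕ) : ℕ → List Word
  | 0 => [[]]
  | n + 1 =>
    (([true, false] ×ˢ [.neg, .zero, .pos]) ×ˢ irreducibleWords N n).filterMap fun (p, W) =>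
      if 0 ≤ startPoint (p :: W) ∧ height (p :: W) + (n + 1) ≤ N ∧ !headReducible (p :: W) then
        some (p :: W)
      else none

theorem mem_irreducibleWords {N : ℕ} {W : Word} (hW : InChamber W) (hirr : IsIrreducible W)
    (hN : height W + W.length ≤ N) : W ∈ irreducibleWords N W.length := by
  induction W with
  | nil => exact List.mem_singleton.2 rfl
  | cons p W ih =>
    have hmem : W ∈ irreducibleWords N W.length := by
      refine ih hW.2 hirr.of_cons ?_
      have := height_le_height_cons p W
      push_cast [List.length_cons] at hN
      omega
    obtain ⟨s, j⟩ := p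
    refine List.mem_filterMap.2 ⟨((s, j), W), ?_, if_pos ?_⟩
    · cases s <;> cases j <;> simp [hmem]
    · exact ⟨hW.1, by simpa using hN, by simp [hirr.headReducible_eq_false]⟩

theorem eq_nil_or_isRotated_of_mem_irreducibleWords :
    ∀ n < 13, ∀ W ∈ irreducibleWords 12 n, startPoint W = 0 →
      W = [] ∨ base ~r W.map Prod.fst := by
  decide +kernel

theorem IsIrreducible.isRotated_base {W : Word} (hirr : IsIrreducible W) (hW : InChamber W)
    (h₀ : startPoint W = 0) (hlen : W.length ≤ 12) (hne : W ≠ []) :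
    base ~r W.map Prod.fst := by
  have hmem : W ∈ irreducibleWords 12 W.length :=
    mem_irreducibleWords hW hirr (by simpa [height, h₀] using hlen)
  exact (eq_nil_or_isRotated_of_mem_irreducibleWords _ (by omega) W hmem h₀).resolve_left hne

/-! ### Executions -/

theorem IsWebTensor.sub_single_mem {W : Word} {x : Tensor} (hx : IsWebTensor W x)
    (hlen : W.length ≤ 12) (hrot : ¬ base ~r W.map Prod.fst) :
    x - Pi.single (states W) 1 ∈ negLattice := by
  induction hn : W.length using Nat.strong_induction_on generalizing W x with
  | _ n ih =>
    subst hn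
    by_cases hirr : IsIrreducible W
    · obtain rfl : W = [] := by
        by_contra hne
        exact hrot (hirr.isRotated_base hx.inChamber hx.startPoint_eq_zero hlen hne)
      cases hx with
      | nil => simp [zero_mem]
      | step h => cases h
    · obtain ⟨T, W', hT⟩ : ∃ T W', Reduces T W W' := by simpa [IsIrreducible] using hirr
      obtain ⟨y, hy, rfl⟩ := hx.exchange_reduces hT
      have hlt := hT.length_lt
      have hrot' : ¬ base ~r W'.map Prod.fst := fun h => by
        have hbase : 12 = W'.length := by simpa [base] using h.perm.length_eq
        omega
      exact hT.isCrystalMap.sub_single_mem (ih _ hlt hy (by omega) hrot' rfl)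

theorem sum_univ_St (f : St → K) : ∑ c : St, f c = f .neg + f .zero + f .pos := by
  rw [show (Finset.univ : Finset St) = {.neg, .zero, .pos} from rfl]
  simp [add_assoc]

theorem row_u (s : Bool) (a b : St) (x : Tensor) (R : List St) :
    row .u a b x R = (if s then bCpm a b else bCmp a b) * x R := by
  cases s <;> cases a <;> cases b <;> simp [row, bCpm, bCmp]

theorem row_y (s : Bool) (a b : St) (x : Tensor) (R : List St) :
    row .y a b x R = ∑ c, (if s then tYpp a b c else tYmm a b c) * x (c :: R) := by
  cases s <;> cases a <;> cases b <;> simp [row, sum_univ_St, tYpp, tYmm]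

theorem row_h (s : Bool) (a b : St) (x : Tensor) (R : List St) :
    row .h a b x R =
      ∑ c, ∑ d, (if s then HCpm a b c d else HCmp a b c d) * x (c :: d :: R) := by
  cases s <;> cases a <;> cases b <;>
    simp [row, sum_univ_St, HCpm, HCmp, tYpp, tLpp, v_ne_zero] <;> ring

theorem IsWebTensor.of_rule {κ : Kind} {p q : Bool × St} {o A B : Word} {x y : Tensor}
    (h : Rule κ p q o) (hx : IsWebTensor (A ++ (o ++ B)) x)
    (hy : ∀ L, y L = match L.drop A.length with
      | a :: b :: R => row κ a b (slice (L.take A.length) x) R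
      | _ => 0) :
    IsWebTensor (A ++ p :: q :: B) y := by
  obtain rfl : y = lift^[A.length] (localMap κ) x := by
    ext L
    rw [hy, lift_iterate_localMap_apply]
  exact .step ((Rewrites.head h B).append A) hx

end WebGrowth

theorem Exec.length_eq {S : List Bool} {J : List St} (e : Exec S J) : S.length = J.length := by
  induction e with
  | nil => rfl
  | _ => simp_all

open WebGrowth in
theorem Exec.isWebTensor {S : List Bool} {J : List St} (e : Exec S J) :
    IsWebTensor (S.zip J) (web e) := by
  induction e with
  | nil =>
    have : web .nil = Pi.single [] 1 := by
      ext L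
      simp [web, Pi.single_apply]
    exact this ▸ .nil
  | hstep A B P Q s₁ s₂ _ _ _ _ hl hs hp e ih =>
    obtain rfl : s₂ = !s₁ := Bool.eq_not.2 hs.symm
    simp only [List.zip_append hl, List.zip_cons_cons, Bool.not_not] at ih ⊢
    refine .of_rule (.h s₁ hp) ih fun L => ?_
    rw [web, List.length_zip, ← hl, min_self]
    split <;> simp [row_h s₁]
  | ustep A B P Q s₁ s₂ hl hs e ih =>
    obtain rfl : s₂ = !s₁ := Bool.eq_not.2 hs.symm
    simp only [List.zip_append hl, List.zip_cons_cons] at ih ⊢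
    refine .of_rule (.u s₁) ih fun L => ?_
    rw [web, List.length_zip, ← hl, min_self]
    split <;> simp [row_u s₁]
  | ystep A B P Q s _ _ _ hl hp e ih =>
    simp only [List.zip_append hl, List.zip_cons_cons] at ih ⊢
    refine .of_rule (.y s hp) ih fun L => ?_
    rw [web, List.length_zip, ← hl, min_self]
    split <;> simp [row_y s]

/-- for every sign string of length at most 12 that is not a
cyclic rotation of `(+,+,−,−,+,+,−,−,+,+,−,−)`, every basis web has the
negative-exponent property. -/
theorem web_negExp_of_not_rotation (S : List Bool) (hlen : S.length ≤ 12)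
    (hrot : ¬ ∃ r : ℕ, S = base.rotate r) :
    ∀ J : List St, Dominant S J → ∀ e : Exec S J, NegExpProp S.length (web e) J := by
  intro J _ e
  have hx : WebGrowth.IsWebTensor (S.zip J) (web e) := e.isWebTensor
  have hS : (S.zip J).map Prod.fst = S := List.map_fst_zip e.length_eq.le
  have hJ : WebGrowth.states (S.zip J) = J := List.map_snd_zip e.length_eq.ge
  have htri := hx.isUnitriangular
  have hlat := hx.sub_single_mem (by simp [hlen]) (by
    rw [hS]
    exact fun ⟨r, hr⟩ => hrot ⟨r, hr.symm⟩)
  rw [hJ] at htri hlat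
  refine ⟨htri.apply_self, fun L _ hL => ?_⟩
  have h := WebGrowth.mem_negLattice.1 hlat L
  rw [Pi.sub_apply, Pi.single_eq_of_ne hL, sub_zero] at h
  exact h

end
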